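/- Let p and q be distinct primes and m, n ∈ ℕ. Then K_1(C_{p^m} ⊕ C_q^n) ≤ K_1(C_{p^m}) + K_1(C_q^n). -/

import Mathlib

open Finset

/-- `S(I)` is minimal zero-sum: nonempty, zero-sum, and no proper nonempty
subfamily is zero-sum. -/
def IsMinZeroSum {G : Type*} [AddCommGroup G] {ℓ : ℕ} (g : Fin ℓ → G)
    (I : Finset (Fin ℓ)) : Prop :=
  I.Nonempty ∧ ∑ i ∈ I, g i = 0 ∧ ∀ J ⊂ I, J.Nonempty → ∑ i ∈ J, g i ≠ 0

/-- `P` is an irreducible factorization of the indexed multiset `g`: a partition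
of the index set all of whose parts are minimal zero-sum. -/
def IsFactorization {G : Type*} [AddCommGroup G] {ℓ : ℕ} (g : Fin ℓ → G)
    (P : Finpartition (Finset.univ : Finset (Fin ℓ))) : Prop :=
  ∀ I ∈ P.parts, IsMinZeroSum g I

/-- `g` is a unique factorization indexed multiset (UFIM) over `G∖{0}`:
all elements are nonzero and there is exactly one irreducible factorization. -/
def IsUFIM {G : Type*} [AddCommGroup G] {ℓ : ℕ} (g : Fin ℓ → G) : Prop :=
  (∀ i, g i ≠ 0) ∧
  ∃! P : Finpartition (Finset.univ : Finset (Fin ℓ)), IsFactorization g P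

/-- The cross number `k(S) = ∑ 1/ord(g_i)`. -/
noncomputable def crossNum {G : Type*} [AddCommGroup G] {ℓ : ℕ} (g : Fin ℓ → G) : ℝ :=
  ∑ i, (1 : ℝ) / (addOrderOf (g i) : ℝ)

/-- `K₁(G)`: the maximal cross number of a UFIM over `G∖{0}`. -/
noncomputable def K1 (G : Type*) [AddCommGroup G] : ℝ :=
  sSup {x : ℝ | ∃ (ℓ : ℕ) (g : Fin ℓ → G), IsUFIM g ∧ crossNum g = x}

/-- `N₁(G)`: the maximal length of a UFIM over `G∖{0}`. -/
noncomputable def N1 (G : Type*) [AddCommGroup G] : ℕ :=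
  sSup {n : ℕ | ∃ g : Fin n → G, IsUFIM g}

/-- `K(G)`: the maximal cross number of a minimal zero-sum indexed multiset over `G∖{0}`. -/
noncomputable def Kcross (G : Type*) [AddCommGroup G] : ℝ :=
  sSup {x : ℝ | ∃ (ℓ : ℕ) (g : Fin ℓ → G), (∀ i, g i ≠ 0) ∧
    IsMinZeroSum g Finset.univ ∧ crossNum g = x}

/-- `g` is zero-sum free: no nonempty subfamily is zero-sum. -/
def IsZeroSumFree {G : Type*} [AddCommGroup G] {ℓ : ℕ} (g : Fin ℓ → G) : Prop :=
  ∀ I : Finset (Fin ℓ), I.Nonempty → ∑ i ∈ I, g i ≠ 0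

/-- The little cross number `k(G)`: the maximal cross number of a zero-sum free
indexed multiset over `G∖{0}`. -/
noncomputable def littleCross (G : Type*) [AddCommGroup G] : ℝ :=
  sSup {x : ℝ | ∃ (ℓ : ℕ) (g : Fin ℓ → G), (∀ i, g i ≠ 0) ∧
    IsZeroSumFree g ∧ crossNum g = x}

/-! Unique factorization forces the zero-sum subfamilies of a UFIM over `A × H`, `A = C_{p^m}`,
`H = C_q^n`, to be closed under intersection. Among the elements with nonzero `H`-component, pick
greedily disjoint blocks which are minimal zero-sum in `A` but not zero-sum in `A × H`. A minimal
zero-sum family over `A` has cross number at most `1`, so each block contributes at most `1 / q`,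
which is the cross number of its sum in `H`; these block sums form part of a UFIM over `H`. If the
subset sums of the blocks exhaust `H`, they correct the `H`-component of any subfamily which is
zero-sum in `A`, so all remaining elements project to part of a UFIM over `A`. Otherwise the block
sums extend by two further elements, leaving `2 / q` to spare in `K₁(H)`; this pays for the
remaining elements with nonzero `H`-component, because `K₁(A) ≤ 2`. -/

section Families

variable {ι κ G H : Type*} [AddCommGroup G] [AddCommGroup H] {f : ι → G} {s t I : Finset ι}

/-- `S(I)` is minimal zero-sum, for families with an arbitrary index type; the form of
`IsMinZeroSum` that also applies to families of sums indexed by blocks. -/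
def IsMinZeroSumOn (f : ι → G) (I : Finset ι) : Prop :=
  Minimal (fun J : Finset ι ↦ J.Nonempty ∧ ∑ i ∈ J, f i = 0) I

/-- The family `f` restricted to `s` is part of a UFIM. This is encoded without reference to the
larger family: the entries are nonzero, and zero-sum subfamilies are closed under intersection. -/
structure IsSubUFIM [DecidableEq ι] (f : ι → G) (s : Finset ι) : Prop where
  ne_zero : ∀ i ∈ s, f i ≠ 0
  sum_inter : ∀ I ⊆ s, ∀ J ⊆ s, ∑ i ∈ I, f i = 0 → ∑ i ∈ J, f i = 0 → ∑ i ∈ I ∩ J, f i = 0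

/-- The cross number of the family `f` restricted to `s`. -/
noncomputable def crossNumOn (f : ι → G) (s : Finset ι) : ℝ :=
  ∑ i ∈ s, (1 : ℝ) / (addOrderOf (f i) : ℝ)

theorem isMinZeroSum_iff_isMinZeroSumOn {ℓ : ℕ} {g : Fin ℓ → G} {I : Finset (Fin ℓ)} :
    IsMinZeroSum g I ↔ IsMinZeroSumOn g I := by
  simp only [IsMinZeroSum, IsMinZeroSumOn, minimal_iff_forall_lt, not_and, and_assoc,
    ne_eq]

theorem exists_isMinZeroSumOn_subset (hI : I.Nonempty) (hI0 : ∑ i ∈ I, f i = 0) :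
    ∃ T ⊆ I, IsMinZeroSumOn f T :=
  exists_minimal_le_of_wellFoundedLT _ I ⟨hI, hI0⟩

theorem IsMinZeroSumOn.ne_zero (hI : IsMinZeroSumOn f I) (hcard : #I ≠ 1) : ∀ i ∈ I, f i ≠ 0 := by
  intro i hi hi0
  have := hI.eq_of_le ⟨singleton_nonempty i, by simpa using hi0⟩ (singleton_subset_iff.2 hi)
  exact hcard (card_eq_one.2 ⟨i, this.symm⟩)

variable [DecidableEq ι]

theorem sum_sdiff_eq_zero (hts : t ⊆ s) (hs : ∑ i ∈ s, f i = 0) (ht : ∑ i ∈ t, f i = 0) :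
    ∑ i ∈ s \ t, f i = 0 := by
  rw [sum_sdiff_eq_sub hts, hs, ht, sub_zero]

theorem exists_maximal_finpartition {Q : Finset ι → Prop} (hQ : ∀ T, Q T → T.Nonempty)
    (s : Finset ι) :
    ∃ U ⊆ s, ∃ P : Finpartition U, (∀ T ∈ P.parts, Q T) ∧ ∀ T ⊆ s \ U, ¬ Q T := by
  let R (U : Finset ι) : Prop := U ⊆ s ∧ ∃ P : Finpartition U, ∀ T ∈ P.parts, Q T
  have hfin : {U | R U}.Finite := s.powerset.finite_toSet.subset fun U hU ↦ by simpa using hU.1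
  obtain ⟨U, ⟨hUs, P, hP⟩, hmax⟩ :=
    hfin.exists_maximal ⟨∅, empty_subset s, Finpartition.empty _, by simp [Finpartition.empty]⟩
  refine ⟨U, hUs, P, hP, fun T hT hQT ↦ ?_⟩
  have hUT : Disjoint U T := disjoint_sdiff.mono_right hT
  have hR : R (U ∪ T) := by
    refine ⟨union_subset hUs (hT.trans sdiff_subset),
      P.extend (hQ T hQT).ne_empty hUT rfl, fun V hV ↦ ?_⟩
    rcases mem_insert.1 hV with rfl | hV
    exacts [hQT, hP V hV]
  have hTU : T ⊆ U := subset_union_right.trans (hmax hR subset_union_left)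
  exact (hQ T hQT).ne_empty (disjoint_self_iff_empty T |>.1 (hUT.mono_left hTU))

/-! ### Merging the parts of a partition -/

section Merge

variable {V W : Finset (Finset ι)}

theorem sum_biUnion_of_subset_parts {M : Type*} [AddCommMonoid M] (P : Finpartition s)
    (hV : V ⊆ P.parts) (f : ι → M) : ∑ i ∈ V.biUnion id, f i = ∑ T ∈ V, ∑ i ∈ T, f i :=
  sum_biUnion (P.disjoint.subset (coe_subset.2 hV))

theorem sum_parts_sum {M : Type*} [AddCommMonoid M] (P : Finpartition s) (f : ι → M) :
    ∑ T ∈ P.parts, ∑ i ∈ T, f i = ∑ i ∈ s, f i := by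
  rw [← sum_biUnion_of_subset_parts P subset_rfl, P.biUnion_parts]

theorem biUnion_subset_of_subset_parts (P : Finpartition s) (hV : V ⊆ P.parts) :
    V.biUnion id ⊆ s :=
  biUnion_subset.2 fun _ hT ↦ P.subset (hV hT)

theorem biUnion_inter_of_subset_parts (P : Finpartition s) (hV : V ⊆ P.parts)
    (hW : W ⊆ P.parts) : (V ∩ W).biUnion id = V.biUnion id ∩ W.biUnion id := by
  ext x
  simp only [mem_biUnion, mem_inter, id]
  constructor
  · rintro ⟨T, ⟨hTV, hTW⟩, hx⟩
    exact ⟨⟨T, hTV, hx⟩, T, hTW, hx⟩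
  · rintro ⟨⟨T, hT, hxT⟩, T', hT', hxT'⟩
    obtain rfl := P.eq_of_mem_parts (hV hT) (hW hT') hxT hxT'
    exact ⟨T, ⟨hT, hT'⟩, hxT⟩

theorem IsMinZeroSumOn.merge (hI : IsMinZeroSumOn f I) (P : Finpartition I) :
    IsMinZeroSumOn (fun T ↦ ∑ i ∈ T, f i) P.parts := by
  refine ⟨⟨P.parts_nonempty hI.prop.1.ne_empty, ?_⟩, ?_⟩
  · rw [sum_parts_sum, hI.prop.2]
  · rintro V ⟨⟨S, hS⟩, hV0⟩ (hV : V ⊆ P.parts) T hT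
    have hne : (V.biUnion id).Nonempty :=
      (P.nonempty_of_mem_parts (hV hS)).mono (subset_biUnion_of_mem id hS)
    rw [← sum_biUnion_of_subset_parts P hV] at hV0
    have hIV : I ⊆ V.biUnion id := hI.2 ⟨hne, hV0⟩ (biUnion_subset_of_subset_parts P hV)
    obtain ⟨x, hx⟩ := P.nonempty_of_mem_parts hT
    obtain ⟨T', hT', hxT'⟩ := mem_biUnion.1 (hIV (P.subset hT hx))
    rwa [P.eq_of_mem_parts hT (hV hT') hx hxT']

theorem IsSubUFIM.merge (h : IsSubUFIM f s) (P : Finpartition s)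
    (hP : ∀ T ∈ P.parts, ∑ i ∈ T, f i ≠ 0) : IsSubUFIM (fun T ↦ ∑ i ∈ T, f i) P.parts where
  ne_zero := hP
  sum_inter V hV W hW hV0 hW0 := by
    rw [← sum_biUnion_of_subset_parts P hV] at hV0
    rw [← sum_biUnion_of_subset_parts P hW] at hW0
    rw [← sum_biUnion_of_subset_parts P (inter_subset_left.trans hV),
      biUnion_inter_of_subset_parts P hV hW]
    exact h.sum_inter _ (biUnion_subset_of_subset_parts P hV) _
      (biUnion_subset_of_subset_parts P hW) hV0 hW0

end Merge

theorem exists_finpartition_isMinZeroSumOn (hs : ∑ i ∈ s, f i = 0) :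
    ∃ P : Finpartition s, ∀ T ∈ P.parts, IsMinZeroSumOn f T := by
  obtain ⟨U, hUs, P, hP, hmax⟩ :=
    exists_maximal_finpartition (Q := IsMinZeroSumOn f) (fun _ hT ↦ hT.prop.1) s
  have hU0 : ∑ i ∈ U, f i = 0 := by
    rw [← sum_parts_sum P]
    exact sum_eq_zero fun T hT ↦ (hP T hT).prop.2
  have hrest : s \ U = ∅ := by
    by_contra hne
    obtain ⟨T, hT, hTmin⟩ := exists_isMinZeroSumOn_subset (nonempty_iff_ne_empty.2 hne)
      (sum_sdiff_eq_zero hUs hs hU0)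
    exact hmax T hT hTmin
  obtain rfl : U = s := hUs.antisymm (sdiff_eq_empty_iff_subset.1 hrest)
  exact ⟨P, hP⟩

theorem exists_finpartition_of_map_eq_zero (φ : G →+ H) (f : ι → G) (s : Finset ι) :
    ∃ U ⊆ s, ∃ P : Finpartition U,
      (∀ T ∈ P.parts, IsMinZeroSumOn (fun i ↦ φ (f i)) T ∧ ∑ i ∈ T, f i ≠ 0) ∧
      ∀ J ⊆ s \ U, ∑ i ∈ J, φ (f i) = 0 → ∑ i ∈ J, f i = 0 := by
  obtain ⟨U, hUs, P, hP, hmax⟩ := exists_maximal_finpartition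
    (Q := fun T ↦ IsMinZeroSumOn (fun i ↦ φ (f i)) T ∧ ∑ i ∈ T, f i ≠ 0) (fun _ hT ↦ hT.1.prop.1) s
  refine ⟨U, hUs, P, hP, fun J hJ hJ0 ↦ ?_⟩
  obtain ⟨PJ, hPJ⟩ := exists_finpartition_isMinZeroSumOn hJ0
  rw [← sum_parts_sum PJ]
  refine sum_eq_zero fun T hT ↦ ?_
  by_contra hT0
  exact hmax T ((PJ.subset hT).trans hJ) ⟨hPJ T hT, hT0⟩

/-! ### Parts of a UFIM -/

namespace IsSubUFIM

theorem mono (h : IsSubUFIM f s) (hts : t ⊆ s) : IsSubUFIM f t where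
  ne_zero i hi := h.ne_zero i (hts hi)
  sum_inter I hI J hJ := h.sum_inter I (hI.trans hts) J (hJ.trans hts)

theorem map_hom (h : IsSubUFIM f s) (φ : G →+ H)
    (hφ : ∀ J ⊆ s, ∑ i ∈ J, φ (f i) = 0 → ∑ i ∈ J, f i = 0) :
    IsSubUFIM (fun i ↦ φ (f i)) s where
  ne_zero i hi hi0 := h.ne_zero i hi <| by
    simpa using hφ {i} (singleton_subset_iff.2 hi) (by simpa using hi0)
  sum_inter I hI J hJ hI0 hJ0 := by
    rw [← map_sum, h.sum_inter I hI J hJ (hφ I hI hI0) (hφ J hJ hJ0), map_zero]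

theorem map_embedding_iff [DecidableEq κ] {e : κ ↪ ι} {s : Finset κ} :
    IsSubUFIM f (s.map e) ↔ IsSubUFIM (fun k ↦ f (e k)) s := by
  constructor
  · refine fun h ↦ ⟨fun k hk ↦ h.ne_zero _ (mem_map_of_mem e hk), fun I hI J hJ hI0 hJ0 ↦ ?_⟩
    have := h.sum_inter _ (map_subset_map.2 hI) _ (map_subset_map.2 hJ)
    simp only [← map_inter, sum_map] at this
    exact this hI0 hJ0
  · refine fun h ↦ ⟨by simpa using h.ne_zero, fun I hI J hJ hI0 hJ0 ↦ ?_⟩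
    obtain ⟨I', hI', rfl⟩ := subset_map_iff.1 hI
    obtain ⟨J', hJ', rfl⟩ := subset_map_iff.1 hJ
    rw [sum_map] at hI0 hJ0
    rw [← map_inter, sum_map]
    exact h.sum_inter I' hI' J' hJ' hI0 hJ0

/-- A subfamily of `s \ U` which is zero-sum under `φ` becomes zero-sum after adding suitable parts
of `P`, and these additions are invisible to `φ`. -/
theorem map_hom_sdiff_of_cover (h : IsSubUFIM f s) (φ : G →+ H) {U : Finset ι} (hUs : U ⊆ s)
    (hne : ∀ i ∈ s \ U, φ (f i) ≠ 0) (P : Finpartition U)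
    (hP : ∀ T ∈ P.parts, φ (∑ i ∈ T, f i) = 0)
    (hcover : ∀ x, φ x = 0 → ∃ V ⊆ P.parts, ∑ T ∈ V, ∑ i ∈ T, f i = x) :
    IsSubUFIM (fun i ↦ φ (f i)) (s \ U) := by
  have hdisj {I V} (hI : I ⊆ s \ U) (hV : V ⊆ P.parts) : Disjoint I (V.biUnion id) :=
    sdiff_disjoint.mono hI (biUnion_subset_of_subset_parts P hV)
  have hsub {I V} (hI : I ⊆ s \ U) (hV : V ⊆ P.parts) : I ∪ V.biUnion id ⊆ s :=
    union_subset (hI.trans sdiff_subset) ((biUnion_subset_of_subset_parts P hV).trans hUs)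
  have hsum {I V} (hI : I ⊆ s \ U) (hV : V ⊆ P.parts) :
      ∑ i ∈ I ∪ V.biUnion id, f i = ∑ i ∈ I, f i + ∑ T ∈ V, ∑ i ∈ T, f i := by
    rw [sum_union (hdisj hI hV), sum_biUnion_of_subset_parts P hV]
  have hcorrect {I} (hI : I ⊆ s \ U) (hI0 : ∑ i ∈ I, φ (f i) = 0) :
      ∃ V ⊆ P.parts, ∑ i ∈ I ∪ V.biUnion id, f i = 0 := by
    obtain ⟨V, hV, hVI⟩ := hcover (-∑ i ∈ I, f i) (by rw [map_neg, map_sum, hI0, neg_zero])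
    exact ⟨V, hV, by rw [hsum hI hV, hVI, add_neg_cancel]⟩
  refine ⟨hne, fun I hI J hJ hI0 hJ0 ↦ ?_⟩
  obtain ⟨V, hV, hIV⟩ := hcorrect hI hI0
  obtain ⟨W, hW, hJW⟩ := hcorrect hJ hJ0
  have hVW : V ∩ W ⊆ P.parts := inter_subset_left.trans hV
  have hinter : (I ∪ V.biUnion id) ∩ (J ∪ W.biUnion id) = (I ∩ J) ∪ (V ∩ W).biUnion id := by
    rw [biUnion_inter_of_subset_parts P hV hW, union_inter_distrib_right, inter_union_distrib_left,
      inter_union_distrib_left, disjoint_iff_inter_eq_empty.1 (hdisj hI hW),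
      disjoint_iff_inter_eq_empty.1 (hdisj hJ hV).symm, union_empty, empty_union]
  have hφVW : φ (∑ T ∈ V ∩ W, ∑ i ∈ T, f i) = 0 := by
    rw [map_sum]
    exact sum_eq_zero fun T hT ↦ hP T (hVW hT)
  have h0 := h.sum_inter _ (hsub hI hV) _ (hsub hJ hW) hIV hJW
  rw [hinter, hsum (inter_subset_left.trans hI) hVW] at h0
  calc ∑ i ∈ I ∩ J, φ (f i) = φ (∑ i ∈ I ∩ J, f i + ∑ T ∈ V ∩ W, ∑ i ∈ T, f i) := by
        rw [map_add, hφVW, add_zero, map_sum]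
    _ = 0 := by rw [h0, map_zero]

theorem insert_of_sum_eq_zero {x : ι} (h : IsSubUFIM f s) (hx : f x ≠ 0)
    (h0 : ∑ i ∈ insert x s, f i = 0) : IsSubUFIM f (insert x s) where
  ne_zero := forall_mem_insert _ _ _ |>.2 ⟨hx, h.ne_zero⟩
  sum_inter := by
    have inter_of_notMem : ∀ I ⊆ insert x s, ∀ J ⊆ insert x s, ∑ i ∈ I, f i = 0 →
        ∑ i ∈ J, f i = 0 → x ∉ J → ∑ i ∈ I ∩ J, f i = 0 := by
      intro I hI J hJ hI0 hJ0 hxJ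
      have hJs : J ⊆ s := (subset_insert_iff_of_notMem hxJ).1 hJ
      by_cases hxI : x ∈ I
      · have hIs : insert x s \ I ⊆ s := by
          rw [insert_sdiff_of_mem s hxI]
          exact sdiff_subset
        have := h.sum_inter J hJs _ hIs hJ0 (sum_sdiff_eq_zero hI h0 hI0)
        rw [← inter_sdiff_assoc, inter_eq_left.2 hJ] at this
        rw [inter_comm, ← sdiff_sdiff_self_left]
        exact sum_sdiff_eq_zero sdiff_subset hJ0 this
      · exact h.sum_inter I ((subset_insert_iff_of_notMem hxI).1 hI) J hJs hI0 hJ0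
    intro I hI J hJ hI0 hJ0
    by_cases hxJ : x ∈ J
    · have := inter_of_notMem I hI _ sdiff_subset hI0 (sum_sdiff_eq_zero hJ h0 hJ0) (by simp [hxJ])
      rw [← inter_sdiff_assoc, inter_eq_left.2 hI] at this
      rw [← sdiff_sdiff_self_left]
      exact sum_sdiff_eq_zero sdiff_subset hI0 this
    · exact inter_of_notMem I hI J hJ hI0 hJ0 hxJ

theorem insert_of_forall_sum_ne {x : ι} (h : IsSubUFIM f s) (hx : ∀ V ⊆ s, ∑ i ∈ V, f i ≠ -f x) :
    IsSubUFIM f (insert x s) := by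
  have subset_of_zeroSum : ∀ I ⊆ insert x s, ∑ i ∈ I, f i = 0 → I ⊆ s := by
    intro I hI hI0
    refine (subset_insert_iff_of_notMem fun hxI ↦ ?_).1 hI
    exact hx (I.erase x) (subset_insert_iff.1 hI)
      (eq_neg_of_add_eq_zero_left ((sum_erase_add I f hxI).trans hI0))
  refine ⟨forall_mem_insert _ _ _ |>.2 ⟨fun hx0 ↦ hx ∅ (empty_subset s) (by simp [hx0]),
    h.ne_zero⟩, fun I hI J hJ hI0 hJ0 ↦ ?_⟩
  exact h.sum_inter I (subset_of_zeroSum I hI hI0) J (subset_of_zeroSum J hJ hJ0) hI0 hJ0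

end IsSubUFIM

theorem IsUFIM.mem_parts {ℓ : ℕ} {g : Fin ℓ → G} (hg : IsUFIM g)
    {P : Finpartition (univ : Finset (Fin ℓ))} (hP : IsFactorization g P) {T : Finset (Fin ℓ)}
    (hT : IsMinZeroSumOn g T) : T ∈ P.parts := by
  have htotal : ∑ i, g i = 0 := by
    rw [← sum_parts_sum P]
    exact sum_eq_zero fun T hT ↦ (hP T hT).2.1
  obtain ⟨Q, hQ⟩ := exists_finpartition_isMinZeroSumOn
    (sum_sdiff_eq_zero (subset_univ T) htotal hT.prop.2)
  let Q' : Finpartition (univ : Finset (Fin ℓ)) := Q.extend (b := T) hT.prop.1.ne_empty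
    sdiff_disjoint (sdiff_union_of_subset (subset_univ T))
  have hQ' : IsFactorization g Q' := by
    intro I hI
    rw [isMinZeroSum_iff_isMinZeroSumOn]
    rcases mem_insert.1 hI with rfl | hI
    exacts [hT, hQ I hI]
  rw [hg.2.unique hP hQ']
  exact mem_insert_self T Q.parts

theorem IsUFIM.isSubUFIM {ℓ : ℕ} {g : Fin ℓ → G} (hg : IsUFIM g) : IsSubUFIM g univ where
  ne_zero i _ := hg.1 i
  sum_inter I _ J _ hI0 hJ0 := by
    obtain ⟨P, hP, -⟩ := hg.2
    obtain ⟨PI, hPI⟩ := exists_finpartition_isMinZeroSumOn hI0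
    obtain ⟨PJ, hPJ⟩ := exists_finpartition_isMinZeroSumOn hJ0
    have hI : PI.parts ⊆ P.parts := fun T hT ↦ hg.mem_parts hP (hPI T hT)
    have hJ : PJ.parts ⊆ P.parts := fun T hT ↦ hg.mem_parts hP (hPJ T hT)
    rw [← PI.biUnion_parts, ← PJ.biUnion_parts, ← biUnion_inter_of_subset_parts P hI hJ,
      sum_biUnion_of_subset_parts P (inter_subset_left.trans hI)]
    exact sum_eq_zero fun T hT ↦ (hPI T (mem_of_mem_inter_left hT)).prop.2

theorem IsSubUFIM.isUFIM {ℓ : ℕ} {g : Fin ℓ → G} (h : IsSubUFIM g univ) (h0 : ∑ i, g i = 0) :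
    IsUFIM g := by
  have parts_subset : ∀ P Q : Finpartition (univ : Finset (Fin ℓ)), IsFactorization g P →
      IsFactorization g Q → P.parts ⊆ Q.parts := by
    intro P Q hP hQ I hI
    have hImin := isMinZeroSum_iff_isMinZeroSumOn.1 (hP I hI)
    obtain ⟨x, hx⟩ := hImin.prop.1
    obtain ⟨J, hJ, hxJ⟩ := Q.exists_mem (mem_univ x)
    have hJmin := isMinZeroSum_iff_isMinZeroSumOn.1 (hQ J hJ)
    have hIJ : (I ∩ J).Nonempty ∧ ∑ i ∈ I ∩ J, g i = 0 :=
      ⟨⟨x, mem_inter.2 ⟨hx, hxJ⟩⟩,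
        h.sum_inter I (subset_univ I) J (subset_univ J) hImin.prop.2 hJmin.prop.2⟩
    rwa [← hImin.eq_of_le hIJ inter_subset_left, hJmin.eq_of_le hIJ inter_subset_right]
  obtain ⟨P, hP⟩ := exists_finpartition_isMinZeroSumOn h0
  replace hP : IsFactorization g P := fun T hT ↦ isMinZeroSum_iff_isMinZeroSumOn.2 (hP T hT)
  exact ⟨fun i ↦ h.ne_zero i (mem_univ i), P, hP, fun Q hQ ↦
    Finpartition.ext ((parts_subset Q P hQ hP).antisymm (parts_subset P Q hP hQ))⟩

theorem IsMinZeroSumOn.isSubUFIM (hI : IsMinZeroSumOn f I) (hcard : #I ≠ 1) :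
    IsSubUFIM f I where
  ne_zero := hI.ne_zero hcard
  sum_inter J hJ K hK hJ0 hK0 := by
    rcases J.eq_empty_or_nonempty with rfl | hJne
    · simp
    · rwa [hI.eq_of_le ⟨hJne, hJ0⟩ hJ, inter_eq_right.2 hK]

end Families

/-! ### Lower bounds for `K₁` -/

section K1

variable {ι κ G H : Type*} [AddCommGroup G] [AddCommGroup H] {f : ι → G} {s t : Finset ι}

theorem crossNumOn_univ {ℓ : ℕ} (g : Fin ℓ → G) : crossNumOn g univ = crossNum g := rfl

theorem crossNumOn_map (e : κ ↪ ι) (s : Finset κ) :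
    crossNumOn f (s.map e) = crossNumOn (fun k ↦ f (e k)) s :=
  sum_map s e _

theorem crossNumOn_nonneg (f : ι → G) (s : Finset ι) : 0 ≤ crossNumOn f s :=
  sum_nonneg fun _ _ ↦ by positivity

theorem K1_nonneg (G : Type*) [AddCommGroup G] : 0 ≤ K1 G := by
  refine Real.sSup_nonneg ?_
  rintro _ ⟨ℓ, g, -, rfl⟩
  exact crossNumOn_nonneg g univ

theorem crossNumOn_le_map_hom [Finite G] (φ : G →+ H) (f : ι → G) (s : Finset ι) :
    crossNumOn f s ≤ crossNumOn (fun i ↦ φ (f i)) s := by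
  refine sum_le_sum fun i _ ↦ ?_
  have hdvd := addOrderOf_map_dvd φ (f i)
  have hpos := addOrderOf_pos (f i)
  refine one_div_le_one_div_of_le ?_ ?_
  · exact_mod_cast Nat.pos_of_dvd_of_pos hdvd hpos
  · exact_mod_cast Nat.le_of_dvd hpos hdvd

variable [DecidableEq ι]

theorem crossNumOn_sdiff_add (hts : t ⊆ s) :
    crossNumOn f (s \ t) + crossNumOn f t = crossNumOn f s :=
  sum_sdiff hts

theorem crossNumOn_insert {x : ι} (hx : x ∉ s) :
    crossNumOn f (insert x s) = 1 / addOrderOf (f x) + crossNumOn f s :=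
  sum_insert hx

theorem crossNumOn_parts (P : Finpartition s) :
    ∑ T ∈ P.parts, crossNumOn f T = crossNumOn f s :=
  sum_parts_sum P _

theorem IsSubUFIM.map_some (h : IsSubUFIM f s) (d : G) :
    IsSubUFIM (fun o : Option ι ↦ o.elim d f) (s.map Function.Embedding.some) :=
  IsSubUFIM.map_embedding_iff.2 h

variable [Finite G]

namespace IsSubUFIM

theorem card_filter_eq_le_addOrderOf [DecidableEq G] (h : IsSubUFIM f s) (b : G) :
    #{i ∈ s | f i = b} ≤ addOrderOf b := by
  by_contra! hlt
  obtain ⟨K, hK, hKcard⟩ := exists_subset_card_eq (Nat.succ_le_of_lt hlt)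
  have hKs : K ⊆ s := hK.trans (filter_subset _ s)
  have erase_sum : ∀ i ∈ K, ∑ k ∈ K.erase i, f k = 0 := by
    intro i hi
    rw [sum_congr rfl fun k hk ↦ (mem_filter.1 (hK (mem_of_mem_erase hk))).2, sum_const,
      card_erase_of_mem hi, hKcard, Nat.succ_sub_one, addOrderOf_nsmul_eq_zero]
  have hcard : 1 < #K := hKcard ▸ Nat.succ_lt_succ (addOrderOf_pos b)
  obtain ⟨i, hi, j, hj, hij⟩ := one_lt_card.1 hcard
  have hinter := h.sum_inter _ ((erase_subset i K).trans hKs) _ ((erase_subset j K).trans hKs)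
    (erase_sum i hi) (erase_sum j hj)
  rw [inter_erase, inter_eq_left.2 (erase_subset i K)] at hinter
  apply h.ne_zero j (hKs hj)
  calc f j = ∑ k ∈ (K.erase i).erase j, f k + f j := by rw [hinter, zero_add]
    _ = ∑ k ∈ K.erase i, f k := sum_erase_add _ _ (mem_erase.2 ⟨hij.symm, hj⟩)
    _ = 0 := erase_sum i hi

theorem card_le (h : IsSubUFIM f s) : #s ≤ Nat.card G * Nat.card G := by
  classical
  have := Fintype.ofFinite G
  rw [Nat.card_eq_fintype_card]
  exact card_le_mul_card_image_of_maps_to (fun i _ ↦ mem_univ (f i)) _ fun b _ ↦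
    (h.card_filter_eq_le_addOrderOf b).trans addOrderOf_le_card_univ

end IsSubUFIM

theorem bddAbove_crossNum_isUFIM (G : Type*) [AddCommGroup G] [Finite G] :
    BddAbove {x : ℝ | ∃ (ℓ : ℕ) (g : Fin ℓ → G), IsUFIM g ∧ crossNum g = x} := by
  refine ⟨(Nat.card G * Nat.card G : ℕ), ?_⟩
  rintro _ ⟨ℓ, g, hg, rfl⟩
  calc crossNum g ≤ #(univ : Finset (Fin ℓ)) • (1 : ℝ) := by
        refine sum_le_card_nsmul _ _ _ fun i _ ↦ div_le_one_of_le₀ ?_ (Nat.cast_nonneg _)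
        exact_mod_cast addOrderOf_pos (g i)
    _ ≤ (Nat.card G * Nat.card G : ℕ) := by
        rw [nsmul_one]
        exact_mod_cast hg.isSubUFIM.card_le

namespace IsSubUFIM

theorem crossNumOn_le_K1_of_sum_eq_zero (h : IsSubUFIM f s) (h0 : ∑ i ∈ s, f i = 0) :
    crossNumOn f s ≤ K1 G := by
  obtain ⟨n, e, rfl⟩ : ∃ (n : ℕ) (e : Fin n ↪ ι), univ.map e = s :=
    ⟨#s, s.equivFin.symm.toEmbedding.trans (Function.Embedding.subtype _), by
      rw [← map_map, map_univ_equiv, univ_eq_attach, attach_map_val]⟩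
  rw [sum_map] at h0
  refine le_csSup (bddAbove_crossNum_isUFIM G) ⟨_, _, (map_embedding_iff.1 h).isUFIM h0, ?_⟩
  rw [crossNumOn_map, crossNumOn_univ]

theorem crossNumOn_add_le_K1 (h : IsSubUFIM f s) (h0 : ∑ i ∈ s, f i ≠ 0) :
    crossNumOn f s + 1 / addOrderOf (∑ i ∈ s, f i) ≤ K1 G := by
  let d := -∑ i ∈ s, f i
  have hnone : none ∉ s.map Function.Embedding.some := by simp
  have hsum : ∑ o ∈ insert none (s.map Function.Embedding.some), o.elim d f = 0 := by
    rw [sum_insert hnone, sum_map]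
    exact neg_add_cancel _
  have hle := ((h.map_some d).insert_of_sum_eq_zero (x := none) (neg_ne_zero.2 h0) hsum
    ).crossNumOn_le_K1_of_sum_eq_zero hsum
  rw [crossNumOn_insert hnone, crossNumOn_map, Option.elim_none, addOrderOf_neg, add_comm] at hle
  exact hle

theorem crossNumOn_le_K1 (h : IsSubUFIM f s) : crossNumOn f s ≤ K1 G := by
  by_cases h0 : ∑ i ∈ s, f i = 0
  · exact h.crossNumOn_le_K1_of_sum_eq_zero h0
  · exact (le_add_of_nonneg_right (by positivity)).trans (h.crossNumOn_add_le_K1 h0)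

theorem crossNumOn_add_add_le_K1 (h : IsSubUFIM f s) (d : G)
    (hd : ∀ V ⊆ s, ∑ i ∈ V, f i ≠ -d) :
    crossNumOn f s + 1 / addOrderOf d + 1 / addOrderOf (d + ∑ i ∈ s, f i) ≤ K1 G := by
  have hnone : none ∉ s.map Function.Embedding.some := by simp
  have hinsert : IsSubUFIM (fun o : Option ι ↦ o.elim d f)
      (insert none (s.map Function.Embedding.some)) := by
    refine (h.map_some d).insert_of_forall_sum_ne fun V hV ↦ ?_
    obtain ⟨V, hVs, rfl⟩ := subset_map_iff.1 hV
    rw [sum_map]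
    exact hd V hVs
  have hsum : ∑ o ∈ insert none (s.map Function.Embedding.some), o.elim d f =
      d + ∑ i ∈ s, f i := by
    rw [sum_insert hnone, sum_map]
    rfl
  have hne : d + ∑ i ∈ s, f i ≠ 0 := fun h0 ↦ hd s subset_rfl (eq_neg_of_add_eq_zero_right h0)
  have hle := hinsert.crossNumOn_add_le_K1 (hsum ▸ hne)
  rw [hsum, crossNumOn_insert hnone, crossNumOn_map, Option.elim_none, add_comm (1 / _)] at hle
  exact hle

end IsSubUFIM

end K1

/-! ### Cyclic groups -/

section Cyclic

variable {ι G : Type*} [AddCommGroup G] {f : ι → G} {s T : Finset ι} {p m : ℕ}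

theorem addOrderOf_le_card_of_add_mem {X : Finset G} {x : G} (h0 : 0 ∈ X)
    (hadd : ∀ y ∈ X, x + y ∈ X) : addOrderOf x ≤ #X := by
  have hmul : ∀ k : ℕ, k • x ∈ X := by
    intro k
    induction k with
    | zero => rwa [zero_nsmul]
    | succ k ih => exact succ_nsmul' x k ▸ hadd _ ih
  exact le_card_of_inj_on_range (fun k ↦ k • x) (fun k _ ↦ hmul k)
    fun i hi j hj ↦ nsmul_injOn_Iio_addOrderOf hi hj

/-- If adding an element `x` creates no new subset sum, then the set of subset sums contains all
multiples of `x`. -/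
theorem min_le_card_subset_sums [DecidableEq G] {n : ℕ} :
    (∀ i ∈ s, n ≤ addOrderOf (f i)) →
      min n (#s + 1) ≤ #(s.powerset.image fun V ↦ ∑ i ∈ V, f i) := by
  classical
  induction s using Finset.induction_on with
  | empty => simp
  | insert x s hx ih =>
    intro hord
    specialize ih fun i hi ↦ hord i (mem_insert_of_mem hi)
    set X := s.powerset.image fun V ↦ ∑ i ∈ V, f i
    set Y := (insert x s).powerset.image fun V ↦ ∑ i ∈ V, f i
    have hXY : X ⊆ Y := image_subset_image (powerset_mono.2 (subset_insert x s))
    have hadd : ∀ y ∈ X, f x + y ∈ Y := by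
      intro y hy
      obtain ⟨V, hV, rfl⟩ := mem_image.1 hy
      rw [mem_powerset] at hV
      exact mem_image.2 ⟨insert x V, mem_powerset.2 (insert_subset_insert x hV),
        sum_insert fun hxV ↦ hx (hV hxV)⟩
    rw [card_insert_of_notMem hx]
    rcases hXY.eq_or_ssubset with heq | hlt
    · have h0 : 0 ∈ X := mem_image.2 ⟨∅, empty_mem_powerset s, sum_empty⟩
      have hle := (hord x (mem_insert_self x s)).trans
        (addOrderOf_le_card_of_add_mem h0 fun y hy ↦ heq ▸ hadd y hy)
      exact (min_le_left _ _).trans (heq ▸ hle)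
    · have := card_lt_card hlt
      omega

variable [Finite G] [IsAddCyclic G]

theorem exists_subset_sum_eq (hp : p.Prime) (hne : ∀ i ∈ s, f i ≠ 0)
    (htor : ∀ i ∈ s, p • f i = 0) (hcard : p ≤ #s + 1) {y : G} (hy : p • y = 0) :
    ∃ V ⊆ s, ∑ i ∈ V, f i = y := by
  classical
  have := Fintype.ofFinite G
  have := Fact.mk hp
  let X := s.powerset.image fun V ↦ ∑ i ∈ V, f i
  have hsub : X ⊆ ({x | p • x = 0} : Finset G) := by
    intro x hx
    obtain ⟨V, hV, rfl⟩ := mem_image.1 hx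
    rw [mem_filter_univ, smul_sum]
    exact sum_eq_zero fun i hi ↦ htor i (mem_powerset.1 hV hi)
  have hX : p ≤ #X := by
    rw [← min_eq_left hcard]
    exact min_le_card_subset_sums fun i hi ↦ (addOrderOf_eq_prime (htor i hi) (hne i hi)).ge
  have heq := eq_of_subset_of_card_le hsub ((IsAddCyclic.card_nsmul_eq_zero_le hp.pos).trans hX)
  obtain ⟨V, hV, hVy⟩ := mem_image.1 (heq ▸ (mem_filter_univ y).2 hy : y ∈ X)
  exact ⟨V, mem_powerset.1 hV, hVy⟩

theorem exists_zeroSum_mem_notMem (hp : p.Prime) (hne : ∀ i ∈ s, f i ≠ 0)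
    (htor : ∀ i ∈ s, p • f i = 0) (hcard : p < #s) {x y : ι} (hx : x ∈ s) (hy : y ∈ s)
    (hxy : x ≠ y) : ∃ K ⊆ s, x ∈ K ∧ y ∉ K ∧ ∑ i ∈ K, f i = 0 := by
  classical
  let s' := (s.erase x).erase y
  have hs' : s' ⊆ s := (erase_subset _ _).trans (erase_subset _ _)
  have hcard' : p ≤ #s' + 1 := by
    rw [card_erase_add_one (mem_erase.2 ⟨hxy.symm, hy⟩), card_erase_of_mem hx]
    omega
  obtain ⟨V, hV, hVx⟩ := exists_subset_sum_eq hp (fun i hi ↦ hne i (hs' hi))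
    (fun i hi ↦ htor i (hs' hi)) hcard' (y := -f x) (by rw [smul_neg, htor x hx, neg_zero])
  have hxV : x ∉ V := fun h ↦ by simpa [s'] using hV h
  have hyV : y ∉ V := fun h ↦ by simpa [s'] using hV h
  refine ⟨insert x V, insert_subset hx (hV.trans hs'), mem_insert_self x V, ?_, ?_⟩
  · simp [hxy.symm, hyV]
  · rw [sum_insert hxV, hVx, add_neg_cancel]

theorem IsSubUFIM.card_le_prime [DecidableEq ι] (h : IsSubUFIM f s) (hp : p.Prime)
    (htor : ∀ i ∈ s, p • f i = 0) : #s ≤ p := by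
  by_contra! hcard
  obtain ⟨x, hx, y, hy, hxy⟩ := one_lt_card.1 (hp.one_lt.trans hcard)
  obtain ⟨K, hKs, hxK, -, hK0⟩ := exists_zeroSum_mem_notMem hp h.ne_zero htor hcard hx hy hxy
  obtain ⟨T, hTK, hT⟩ := exists_isMinZeroSumOn_subset ⟨x, hxK⟩ hK0
  have hTs : T ⊆ s := hTK.trans hKs
  have hTcard : 1 < #T := by
    by_contra! hle
    obtain ⟨i, rfl⟩ := card_eq_one.1 (hle.antisymm hT.prop.1.card_pos)
    exact h.ne_zero i (hTs (mem_singleton_self i)) (by simpa using hT.prop.2)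
  obtain ⟨u, hu, v, hv, huv⟩ := one_lt_card.1 hTcard
  obtain ⟨L, hLs, huL, hvL, hL0⟩ :=
    exists_zeroSum_mem_notMem hp h.ne_zero htor hcard (hTs hu) (hTs hv) huv
  have hTL := hT.2 ⟨⟨u, mem_inter.2 ⟨hu, huL⟩⟩, h.sum_inter T hTs L hLs hT.prop.2 hL0⟩
    inter_subset_left
  exact hvL (mem_inter.1 (hTL hv)).2

theorem IsSubUFIM.crossNumOn_le_one_div_pow [DecidableEq ι] (hp : p.Prime)
    (h : IsSubUFIM (fun i ↦ p ^ m • f i) s) (htor : ∀ i ∈ s, p ^ (m + 1) • f i = 0) :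
    crossNumOn f s ≤ (1 / p) ^ m := by
  have := Fact.mk hp
  have hp0 : (p : ℝ) ≠ 0 := by exact_mod_cast hp.ne_zero
  have hord : ∀ i ∈ s, addOrderOf (f i) = p ^ (m + 1) := fun i hi ↦
    addOrderOf_eq_prime_pow (h.ne_zero i hi) (htor i hi)
  have hcard : #s ≤ p := h.card_le_prime hp fun i hi ↦ by
    rw [← mul_nsmul', ← pow_succ', htor i hi]
  calc crossNumOn f s = #s * (1 / p) ^ (m + 1) := by
        rw [crossNumOn, sum_congr rfl fun i hi ↦ by rw [hord i hi], sum_const, nsmul_eq_mul,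
          Nat.cast_pow, one_div_pow]
    _ ≤ p * (1 / p) ^ (m + 1) := by gcongr
    _ = (1 / p) ^ m := by rw [pow_succ']; field_simp

theorem IsMinZeroSumOn.crossNumOn_le_one_div_addOrderOf_sum (hp : p.Prime)
    (hT : IsMinZeroSumOn (fun i ↦ p ^ m • f i) T) (htor : ∀ i ∈ T, p ^ (m + 1) • f i = 0) :
    crossNumOn f T ≤ 1 / addOrderOf (∑ i ∈ T, f i) := by
  classical
  by_cases hcard : #T = 1
  · obtain ⟨i, rfl⟩ := card_eq_one.1 hcard
    simp [crossNumOn]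
  · have hord : addOrderOf (∑ i ∈ T, f i) ≤ p ^ m := by
      refine Nat.le_of_dvd (pow_pos hp.pos m) (addOrderOf_dvd_of_nsmul_eq_zero ?_)
      rw [smul_sum, hT.prop.2]
    calc crossNumOn f T ≤ (1 / p) ^ m := (hT.isSubUFIM hcard).crossNumOn_le_one_div_pow hp htor
      _ = 1 / (p ^ m : ℕ) := by rw [one_div_pow, Nat.cast_pow]
      _ ≤ 1 / addOrderOf (∑ i ∈ T, f i) :=
        one_div_le_one_div_of_le (by exact_mod_cast addOrderOf_pos _) (by exact_mod_cast hord)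

theorem crossNumOn_le_crossNumOn_parts [DecidableEq ι] (hp : p.Prime) (P : Finpartition s)
    (hP : ∀ T ∈ P.parts, IsMinZeroSumOn (fun i ↦ p ^ m • f i) T)
    (htor : ∀ i ∈ s, p ^ (m + 1) • f i = 0) :
    crossNumOn f s ≤ crossNumOn (fun T ↦ ∑ i ∈ T, f i) P.parts := by
  rw [← crossNumOn_parts P]
  exact sum_le_sum fun T hT ↦
    (hP T hT).crossNumOn_le_one_div_addOrderOf_sum hp fun i hi ↦ htor i (P.subset hT hi)

end Cyclic

section CyclicBounds

universe u

variable {G : Type*} [AddCommGroup G] [Finite G] [IsAddCyclic G] {p m : ℕ} {ι : Type u}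
  {f : ι → G} {s T : Finset ι}

theorem IsMinZeroSumOn.crossNumOn_le_one (hp : p.Prime) (hT : IsMinZeroSumOn f T)
    (htor : ∀ i ∈ T, p ^ m • f i = 0) : crossNumOn f T ≤ 1 := by
  classical
  induction m generalizing ι with
  | zero =>
    have hcard : #T = 1 := by
      by_contra hcard
      obtain ⟨i, hi⟩ := hT.prop.1
      exact hT.ne_zero hcard i hi (by simpa using htor i hi)
    obtain ⟨i, rfl⟩ := card_eq_one.1 hcard
    simpa [crossNumOn] using Nat.cast_inv_le_one _
  | succ m ih =>
    obtain ⟨P, hP⟩ := exists_finpartition_isMinZeroSumOn (f := fun i ↦ p ^ m • f i) (s := T)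
      (by rw [← smul_sum, hT.prop.2, smul_zero])
    refine (crossNumOn_le_crossNumOn_parts hp P hP htor).trans (ih (hT.merge P) fun U hU ↦ ?_)
    rw [smul_sum, (hP U hU).prop.2]

theorem IsSubUFIM.crossNumOn_le_geom_sum [DecidableEq ι] (hp : p.Prime) (h : IsSubUFIM f s)
    (htor : ∀ i ∈ s, p ^ m • f i = 0) : crossNumOn f s ≤ ∑ k ∈ range m, (1 / (p : ℝ)) ^ k := by
  induction m generalizing ι with
  | zero =>
    obtain rfl : s = ∅ := eq_empty_of_forall_notMem fun i hi ↦
      h.ne_zero i hi (by simpa using htor i hi)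
    simp [crossNumOn]
  | succ m ih =>
    obtain ⟨U, hUs, P, hP, hrest⟩ :=
      exists_finpartition_of_map_eq_zero (nsmulAddMonoidHom (p ^ m) : G →+ G) f s
    have hU : crossNumOn f U ≤ ∑ k ∈ range m, (1 / (p : ℝ)) ^ k := by
      refine (crossNumOn_le_crossNumOn_parts hp P (fun T hT ↦ (hP T hT).1)
        fun i hi ↦ htor i (hUs hi)).trans
        (ih ((h.mono hUs).merge P fun T hT ↦ (hP T hT).2) fun T hT ↦ ?_)
      rw [smul_sum]
      exact (hP T hT).1.prop.2
    have hsU : crossNumOn f (s \ U) ≤ (1 / p) ^ m :=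
      ((h.mono sdiff_subset).map_hom _ hrest).crossNumOn_le_one_div_pow hp
        fun i hi ↦ htor i (sdiff_subset hi)
    rw [sum_range_succ, ← crossNumOn_sdiff_add hUs, add_comm]
    exact add_le_add hU hsU

theorem IsSubUFIM.crossNumOn_le_two [DecidableEq ι] (hp : p.Prime) (h : IsSubUFIM f s)
    (htor : ∀ i ∈ s, p ^ m • f i = 0) : crossNumOn f s ≤ 2 :=
  calc crossNumOn f s ≤ ∑ k ∈ range m, (1 / (p : ℝ)) ^ k := h.crossNumOn_le_geom_sum hp htor
    _ ≤ ∑ k ∈ range m, (1 / (2 : ℝ)) ^ k := by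
      gcongr
      exact_mod_cast hp.two_le
    _ ≤ 2 := sum_geometric_two_le m

end CyclicBounds

/-! ### Products -/

section Prod

variable {ι A H : Type*} [AddCommGroup A] [AddCommGroup H] {f : ι → A × H} {s T U : Finset ι}
  {p q m : ℕ}

theorem crossNumOn_eq_crossNumOn_fst_div (hcop : ∀ a : A, (addOrderOf a).Coprime q)
    (hord : ∀ i ∈ s, addOrderOf (f i).2 = q) :
    crossNumOn f s = crossNumOn (fun i ↦ (f i).1) s / q := by
  rw [crossNumOn, crossNumOn, sum_div]
  refine sum_congr rfl fun i hi ↦ ?_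
  rw [Prod.addOrderOf, hord i hi, (hcop _).lcm_eq_mul, Nat.cast_mul, div_mul_eq_div_div]

theorem crossNumOn_le_one_div_of_isMinZeroSumOn_fst [Finite A] [IsAddCyclic A] (hp : p.Prime)
    (hA : ∀ a : A, p ^ m • a = 0) (hcop : ∀ a : A, (addOrderOf a).Coprime q)
    (hord : ∀ i ∈ T, addOrderOf (f i).2 = q) (hT : IsMinZeroSumOn (fun i ↦ (f i).1) T) :
    crossNumOn f T ≤ 1 / q := by
  rw [crossNumOn_eq_crossNumOn_fst_div hcop hord]
  gcongr
  exact hT.crossNumOn_le_one hp fun i _ ↦ hA _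

variable [DecidableEq ι]

theorem crossNumOn_le_two_div_of_isSubUFIM_fst [Finite A] [IsAddCyclic A] (hp : p.Prime)
    (hA : ∀ a : A, p ^ m • a = 0) (hcop : ∀ a : A, (addOrderOf a).Coprime q)
    (hord : ∀ i ∈ s, addOrderOf (f i).2 = q) (hs : IsSubUFIM (fun i ↦ (f i).1) s) :
    crossNumOn f s ≤ 2 / q := by
  rw [crossNumOn_eq_crossNumOn_fst_div hcop hord]
  gcongr
  exact hs.crossNumOn_le_two hp fun i _ ↦ hA _

theorem crossNumOn_le_crossNumOn_parts_snd [Finite A] [IsAddCyclic A] (hp : p.Prime)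
    (hA : ∀ a : A, p ^ m • a = 0) (hcop : ∀ a : A, (addOrderOf a).Coprime q)
    (hord : ∀ i ∈ s, addOrderOf (f i).2 = q) (P : Finpartition s)
    (hP : ∀ T ∈ P.parts, IsMinZeroSumOn (fun i ↦ (f i).1) T)
    (hPord : ∀ T ∈ P.parts, addOrderOf (∑ i ∈ T, f i).2 = q) :
    crossNumOn f s ≤ crossNumOn (fun T ↦ (∑ i ∈ T, f i).2) P.parts := by
  rw [← crossNumOn_parts P]
  refine sum_le_sum fun T hT ↦ ?_
  rw [hPord T hT]
  exact crossNumOn_le_one_div_of_isMinZeroSumOn_fst hp hA hcop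
    (fun i hi ↦ hord i (P.subset hT hi)) (hP T hT)

namespace IsSubUFIM

theorem merge_snd (h : IsSubUFIM f s) (P : Finpartition s)
    (hfst : ∀ T ∈ P.parts, (∑ i ∈ T, f i).1 = 0) (hne : ∀ T ∈ P.parts, ∑ i ∈ T, f i ≠ 0) :
    IsSubUFIM (fun T ↦ (∑ i ∈ T, f i).2) P.parts :=
  (h.merge P hne).map_hom (AddMonoidHom.snd A H) fun V hV hV0 ↦ Prod.ext
    (by rw [Prod.fst_sum]; exact sum_eq_zero fun T hT ↦ hfst T (hV hT))
    (by rw [Prod.snd_sum]; exact hV0)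

theorem crossNumOn_le_K1_of_snd_eq_zero [Finite A] [Finite H] (h : IsSubUFIM f s)
    (hsnd : ∀ i ∈ s, (f i).2 = 0) : crossNumOn f s ≤ K1 A := by
  refine (crossNumOn_le_map_hom (AddMonoidHom.fst A H) f s).trans
    (h.map_hom _ fun J hJ hJ0 ↦ ?_).crossNumOn_le_K1
  refine Prod.ext ((map_sum (AddMonoidHom.fst A H) f J).trans hJ0) ?_
  rw [Prod.snd_sum]
  exact sum_eq_zero fun i hi ↦ hsnd i (hJ hi)

theorem crossNumOn_sdiff_le_K1_of_cover [Finite A] [Finite H] (h : IsSubUFIM f s) (hUs : U ⊆ s)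
    (hne : ∀ i ∈ s \ U, (f i).1 ≠ 0) (P : Finpartition U)
    (hfst : ∀ T ∈ P.parts, (∑ i ∈ T, f i).1 = 0)
    (hcover : ∀ b, ∃ V ⊆ P.parts, ∑ T ∈ V, (∑ i ∈ T, f i).2 = b) :
    crossNumOn f (s \ U) ≤ K1 A := by
  refine (crossNumOn_le_map_hom (AddMonoidHom.fst A H) f _).trans
    (h.map_hom_sdiff_of_cover _ hUs hne P hfst fun x hx ↦ ?_).crossNumOn_le_K1
  obtain ⟨V, hV, hVx⟩ := hcover x.2
  refine ⟨V, hV, Prod.ext ?_ (by rw [Prod.snd_sum, hVx])⟩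
  rw [Prod.fst_sum, sum_eq_zero fun T hT ↦ hfst T (hV hT)]
  exact hx.symm

theorem crossNumOn_add_two_div_le_K1 [Finite H] {g : ι → H} (h : IsSubUFIM g s)
    (hord : ∀ b : H, b ≠ 0 → addOrderOf b = q) {b : H} (hb : ∀ V ⊆ s, ∑ i ∈ V, g i ≠ b) :
    crossNumOn g s + 2 / q ≤ K1 H := by
  have hb0 : -b ≠ 0 := neg_ne_zero.2 fun hb0 ↦ hb ∅ (empty_subset s) (by rw [sum_empty, hb0])
  have hsum : -b + ∑ i ∈ s, g i ≠ 0 := fun h0 ↦ hb s subset_rfl (neg_add_eq_zero.1 h0).symm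
  have hle := h.crossNumOn_add_add_le_K1 (-b) (by simpa only [neg_neg] using hb)
  rw [hord _ hb0, hord _ hsum, add_assoc, ← add_div, one_add_one_eq_two] at hle
  exact hle

theorem crossNumOn_prod_le [Finite A] [IsAddCyclic A] [Finite H] (h : IsSubUFIM f s)
    (hp : p.Prime) (hA : ∀ a : A, p ^ m • a = 0) (hcop : ∀ a : A, (addOrderOf a).Coprime q)
    (hH : ∀ b : H, b ≠ 0 → addOrderOf b = q) : crossNumOn f s ≤ K1 A + K1 H := by
  classical
  let Z := {i ∈ s | (f i).2 = 0}
  have hZs : Z ⊆ s := filter_subset _ s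
  have hord : ∀ i ∈ s \ Z, addOrderOf (f i).2 = q := fun i hi ↦ hH _ fun h0 ↦
    (mem_sdiff.1 hi).2 (mem_filter.2 ⟨(mem_sdiff.1 hi).1, h0⟩)
  obtain ⟨U, hUN, P, hP, hlift⟩ :=
    exists_finpartition_of_map_eq_zero (AddMonoidHom.fst A H) f (s \ Z)
  have hUs : U ⊆ s := hUN.trans sdiff_subset
  have hfst : ∀ T ∈ P.parts, (∑ i ∈ T, f i).1 = 0 := fun T hT ↦
    (map_sum (AddMonoidHom.fst A H) f T).trans (hP T hT).1.prop.2
  have hblocks : IsSubUFIM (fun T ↦ (∑ i ∈ T, f i).2) P.parts :=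
    (h.mono hUs).merge_snd P hfst fun T hT ↦ (hP T hT).2
  have hR : IsSubUFIM (fun i ↦ (f i).1) ((s \ Z) \ U) :=
    (h.mono (sdiff_subset.trans sdiff_subset)).map_hom (AddMonoidHom.fst A H) hlift
  have hU : crossNumOn f U ≤ crossNumOn (fun T ↦ (∑ i ∈ T, f i).2) P.parts :=
    crossNumOn_le_crossNumOn_parts_snd hp hA hcop (fun i hi ↦ hord i (hUN hi)) P
      (fun T hT ↦ (hP T hT).1) fun T hT ↦ hH _ (hblocks.ne_zero T hT)
  by_cases hcover : ∀ b, ∃ V ⊆ P.parts, ∑ T ∈ V, (∑ i ∈ T, f i).2 = b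
  · have hne : ∀ i ∈ s \ U, (f i).1 ≠ 0 := by
      intro i hi hi0
      obtain ⟨his, hiU⟩ := mem_sdiff.1 hi
      by_cases hiZ : i ∈ Z
      · exact h.ne_zero i his (Prod.ext hi0 (mem_filter.1 hiZ).2)
      · exact hR.ne_zero i (mem_sdiff.2 ⟨mem_sdiff.2 ⟨his, hiZ⟩, hiU⟩) hi0
    rw [← crossNumOn_sdiff_add hUs]
    exact add_le_add (h.crossNumOn_sdiff_le_K1_of_cover hUs hne P hfst hcover)
      (hU.trans hblocks.crossNumOn_le_K1)
  · push Not at hcover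
    obtain ⟨b, hb⟩ := hcover
    have hZ : crossNumOn f Z ≤ K1 A :=
      (h.mono hZs).crossNumOn_le_K1_of_snd_eq_zero fun i hi ↦ (mem_filter.1 hi).2
    have hR2 : crossNumOn f ((s \ Z) \ U) ≤ 2 / q :=
      crossNumOn_le_two_div_of_isSubUFIM_fst hp hA hcop (fun i hi ↦ hord i (sdiff_subset hi)) hR
    have hbound := hblocks.crossNumOn_add_two_div_le_K1 hH hb
    rw [← crossNumOn_sdiff_add hZs, ← crossNumOn_sdiff_add hUN]
    linarith

end IsSubUFIM

end Prod

theorem K1_pm_qn_le_general {A H : Type*} [AddCommGroup A] [Finite A] [IsAddCyclic A]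
    [AddCommGroup H] [Finite H] {p q m : ℕ} [Module (ZMod q) H] (hp : p.Prime) (hq : q.Prime)
    (hpq : p ≠ q) (hA : ∀ a : A, p ^ m • a = 0) : K1 (A × H) ≤ K1 A + K1 H := by
  have := Fact.mk hq
  have hcop (a : A) : (addOrderOf a).Coprime q :=
    (((Nat.coprime_primes hp hq).2 hpq).pow_left m).coprime_dvd_left
      (addOrderOf_dvd_of_nsmul_eq_zero (hA a))
  have hH (b : H) (hb : b ≠ 0) : addOrderOf b = q :=
    addOrderOf_eq_prime (ZModModule.char_nsmul_eq_zero q b) hb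
  refine Real.sSup_le ?_ (add_nonneg (K1_nonneg A) (K1_nonneg H))
  rintro _ ⟨ℓ, g, hg, rfl⟩
  exact hg.isSubUFIM.crossNumOn_prod_le hp hA hcop hH

/-- Theorem (mainthm (2)): `K₁(C_{p^m} ⊕ C_q^n) ≤ K₁(C_{p^m}) + K₁(C_q^n)` for distinct
primes `p, q`. -/
theorem K1_pm_qn_le (p q : ℕ) (hp : p.Prime) (hq : q.Prime) (hpq : p ≠ q)
    (m n : ℕ) (hm : 1 ≤ m) (hn : 1 ≤ n) :
    K1 (ZMod (p ^ m) × (Fin n → ZMod q)) ≤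
      K1 (ZMod (p ^ m)) + K1 (Fin n → ZMod q) := by
  have : NeZero (p ^ m) := ⟨pow_ne_zero m hp.ne_zero⟩
  have : NeZero q := ⟨hq.ne_zero⟩
  exact K1_pm_qn_le_general hp hq hpq fun a ↦ by rw [nsmul_eq_mul, ZMod.natCast_self, zero_mul]
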